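/- One has (8/π) ∫_{θ=0}^{π/2} ∫_{φ=ξ(θ)}^{π/2} sin²φ dφ dθ = −(1/π) ( 2√2 · ln(−1 + √2) − 4 Li₂(−1 + √2) + 4 Li₂(1 − √2) ), where ξ(θ) = arccos( sin θ / √(2 − cos²θ) ) and Li₂ denotes the dilogarithm. -/

import Mathlib

open Real

/-- The dilogarithm Li₂(x) = ∑_{k=1}^∞ x^k / k². -/
noncomputable def Li2 (x : ℝ) : ℝ := ∑' k : ℕ, x ^ (k + 1) / ((k : ℝ) + 1) ^ 2

/-!
The inner integral is elementary: with `s = sin θ` it equals `(arctan s + s / (1 + s²)) / 2`,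
because `ξ(θ) = π / 2 - arctan s`. The integral of `s / (1 + s²)` over `[0, π / 2]` gives the
logarithm. The dilogarithms come from `∫ arctan (sin θ)`: taking imaginary parts in the power series
of `-log (1 - z)` at `z = r e^{iθ}` gives
`∑ rⁿ sin (n θ) / n = arctan (r sin θ / (1 - r cos θ))`, and integrating over `[0, π]` gives
`Li₂(r) - Li₂(-r)`. Folding `[0, π]` at `π / 2` turns the integrand into
`arctan (2 r / (1 - r²) * sin θ)`, and `2 r / (1 - r²) = 1` at `r = √2 - 1`.
-/

open intervalIntegral

theorem arccos_div_sqrt_one_add_sq (x : ℝ) : arccos (x / √(1 + x ^ 2)) = π / 2 - arctan x := by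
  rw [arccos, arctan_eq_arcsin]

theorem cos_arctan_mul_sin_arctan (x : ℝ) :
    cos (arctan x) * sin (arctan x) = x / (1 + x ^ 2) := by
  rw [cos_arctan, sin_arctan, div_mul_div_comm, one_mul, mul_self_sqrt (by positivity)]

theorem integral_sin_sq_arccos_div_sqrt (x : ℝ) :
    ∫ φ in arccos (x / √(1 + x ^ 2))..π / 2, sin φ ^ 2 =
      (arctan x + x / (1 + x ^ 2)) / 2 := by
  rw [arccos_div_sqrt_one_add_sq, integral_sin_sq, sin_pi_div_two_sub, cos_pi_div_two_sub,
    cos_arctan_mul_sin_arctan, cos_pi_div_two]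
  ring

section Logarithm

variable {c : ℝ}

theorem sq_sub_cos_sq_pos (hc : 1 < c) (θ : ℝ) : 0 < c ^ 2 - cos θ ^ 2 := by
  nlinarith [cos_sq_le_one θ]

theorem hasDerivAt_log_sub_cos_div_add_cos (hc : 1 < c) (θ : ℝ) :
    HasDerivAt (fun t ↦ (log (c - cos t) - log (c + cos t)) / (2 * c))
      (sin θ / (c ^ 2 - cos θ ^ 2)) θ := by
  have hsub : c - cos θ ≠ 0 := by linarith [cos_le_one θ]
  have hadd : c + cos θ ≠ 0 := by linarith [neg_one_le_cos θ]
  refine (((((hasDerivAt_cos θ).const_sub c).log hsub).sub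
    (((hasDerivAt_cos θ).const_add c).log hadd)).div_const (2 * c)).congr_deriv ?_
  rw [sq_sub_sq]
  field_simp
  ring

theorem integral_sin_div_sq_sub_cos_sq (hc : 1 < c) :
    ∫ θ in 0..π / 2, sin θ / (c ^ 2 - cos θ ^ 2) = log ((c + 1) / (c - 1)) / (2 * c) := by
  have hcont : Continuous fun θ ↦ sin θ / (c ^ 2 - cos θ ^ 2) :=
    continuous_sin.div (by fun_prop) fun θ ↦ (sq_sub_cos_sq_pos hc θ).ne'
  rw [integral_eq_sub_of_hasDerivAt (fun θ _ ↦ hasDerivAt_log_sub_cos_div_add_cos hc θ)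
    (hcont.intervalIntegrable _ _), log_div (by linarith) (by linarith)]
  simp only [cos_pi_div_two, cos_zero, sub_zero, add_zero]
  ring

end Logarithm

section Dilogarithm

theorem hasSum_Li2 {x : ℝ} (hx : |x| ≤ 1) : HasSum (fun n : ℕ ↦ x ^ n / (n : ℝ) ^ 2) (Li2 x) := by
  have hsummable : Summable fun n : ℕ ↦ x ^ n / (n : ℝ) ^ 2 := by
    refine (summable_one_div_nat_pow.mpr one_lt_two).of_norm_bounded fun n ↦ ?_
    rw [norm_div, norm_pow, norm_pow, norm_eq_abs, RCLike.norm_natCast]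
    gcongr
    exact pow_le_one₀ (abs_nonneg x) hx
  have hLi2 : ∑' n : ℕ, x ^ n / (n : ℝ) ^ 2 = Li2 x := by
    simp [hsummable.tsum_eq_zero_add, Li2]
  exact hLi2 ▸ hsummable.hasSum

theorem arg_eq_arctan_im_div_re {z : ℂ} (hz : 0 < z.re) : z.arg = arctan (z.im / z.re) := by
  obtain ⟨hlower, hupper⟩ := abs_lt.mp (Complex.abs_arg_lt_pi_div_two_iff.mpr (Or.inl hz))
  rw [← Complex.tan_arg, arctan_tan hlower hupper]

theorem integral_sin_nat_mul (n : ℕ) : ∫ θ in 0..π, sin (n * θ) = (1 - (-1) ^ n) / n := by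
  rcases eq_or_ne n 0 with rfl | hn
  · simp
  · rw [integral_comp_mul_left sin (Nat.cast_ne_zero.mpr hn), integral_sin, cos_nat_mul_pi,
      mul_zero, cos_zero, smul_eq_mul, inv_mul_eq_div]

variable {r : ℝ}

theorem one_sub_mul_cos_pos (hr : |r| < 1) (θ : ℝ) : 0 < 1 - r * cos θ := by
  have hlt : |r * cos θ| < 1 := by
    rw [abs_mul]
    exact (mul_le_of_le_one_right (abs_nonneg r) (abs_cos_le_one θ)).trans_lt hr
  linarith [(abs_lt.mp hlt).2]

theorem hasSum_pow_mul_sin_div (hr : |r| < 1) (θ : ℝ) :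
    HasSum (fun n : ℕ ↦ r ^ n * sin (n * θ) / n) (arctan (r * sin θ / (1 - r * cos θ))) := by
  set z : ℂ := r * Complex.exp (θ * Complex.I) with hz
  have hz_re : z.re = r * cos θ := by rw [hz, Complex.re_ofReal_mul, Complex.exp_ofReal_mul_I_re]
  have hz_im : z.im = r * sin θ := by rw [hz, Complex.im_ofReal_mul, Complex.exp_ofReal_mul_I_im]
  have hz_norm : ‖z‖ < 1 := by
    rwa [hz, norm_mul, Complex.norm_exp_ofReal_mul_I, mul_one, Complex.norm_real]
  have hpow (n : ℕ) : (z ^ n / n).im = r ^ n * sin (n * θ) / n := by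
    rw [Complex.div_natCast_im, hz, mul_pow, ← Complex.exp_nat_mul, ← mul_assoc,
      ← Complex.ofReal_pow, Complex.im_ofReal_mul, ← Complex.ofReal_natCast, ← Complex.ofReal_mul,
      Complex.exp_ofReal_mul_I_im]
  have hlog : (-Complex.log (1 - z)).im = arctan (r * sin θ / (1 - r * cos θ)) := by
    have hpos : 0 < (1 - z).re := by simpa [hz_re] using one_sub_mul_cos_pos hr θ
    rw [Complex.neg_im, Complex.log_im, arg_eq_arctan_im_div_re hpos, ← arctan_neg]
    simp [hz_re, hz_im, neg_div]
  simpa only [hpow, hlog] using Complex.hasSum_im (Complex.hasSum_taylorSeries_neg_log hz_norm)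

theorem integral_arctan_mul_sin_div_one_sub_mul_cos (hr : |r| < 1) :
    ∫ θ in 0..π, arctan (r * sin θ / (1 - r * cos θ)) = Li2 r - Li2 (-r) := by
  have hbound (n : ℕ) (θ : ℝ) : ‖r ^ n * sin (n * θ) / n‖ ≤ |r| ^ n := by
    rcases n.eq_zero_or_pos with rfl | hn
    · simp
    · rw [norm_div, norm_mul, norm_pow, norm_eq_abs, norm_eq_abs, RCLike.norm_natCast]
      exact (div_le_self (by positivity) (Nat.one_le_cast.mpr hn)).trans <|
        mul_le_of_le_one_right (by positivity) (abs_sin_le_one _)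
  have hterm (n : ℕ) :
      ∫ θ in 0..π, r ^ n * sin (n * θ) / n = r ^ n / (n : ℝ) ^ 2 - (-r) ^ n / (n : ℝ) ^ 2 := by
    rw [integral_div, integral_const_mul, integral_sin_nat_mul, neg_pow]
    ring
  have hintegral : HasSum (fun n : ℕ ↦ ∫ θ in 0..π, r ^ n * sin (n * θ) / n)
      (∫ θ in 0..π, arctan (r * sin θ / (1 - r * cos θ))) :=
    hasSum_integral_of_dominated_convergence (fun n _ ↦ |r| ^ n)
      (fun n ↦ (by fun_prop : Continuous _).aestronglyMeasurable)
      (fun n ↦ .of_forall fun θ _ ↦ hbound n θ)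
      (.of_forall fun _ _ ↦ summable_geometric_of_lt_one (abs_nonneg r) hr)
      intervalIntegrable_const
      (.of_forall fun θ _ ↦ hasSum_pow_mul_sin_div hr θ)
  simp only [hterm] at hintegral
  exact hintegral.unique ((hasSum_Li2 hr.le).sub (hasSum_Li2 ((abs_neg r).trans_le hr.le)))

theorem arctan_div_one_sub_mul_cos_add_pi_sub (hr : |r| < 1) (θ : ℝ) :
    arctan (r * sin θ / (1 - r * cos θ)) + arctan (r * sin (π - θ) / (1 - r * cos (π - θ))) =
      arctan (2 * r / (1 - r ^ 2) * sin θ) := by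
  have hsub : 0 < 1 - r * cos θ := one_sub_mul_cos_pos hr θ
  have hadd : 0 < 1 + r * cos θ := by simpa using one_sub_mul_cos_pos hr (π - θ)
  have hr_sq : 0 < 1 - r ^ 2 := sub_pos.mpr ((sq_lt_one_iff_abs_lt_one r).mpr hr)
  have hden : (1 - r * cos θ) * (1 + r * cos θ) - r * sin θ * (r * sin θ) = 1 - r ^ 2 := by
    linear_combination -r ^ 2 * sin_sq_add_cos_sq θ
  have hprod : r * sin θ / (1 - r * cos θ) * (r * sin θ / (1 + r * cos θ)) < 1 := by
    rw [div_mul_div_comm, div_lt_one (by positivity)]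
    linarith
  rw [sin_pi_sub, cos_pi_sub, mul_neg, sub_neg_eq_add, arctan_add hprod, ← hden]
  congr 1
  rw [← hden] at hr_sq
  field_simp
  ring

theorem integral_arctan_mul_sin (hr : |r| < 1) :
    ∫ θ in 0..π / 2, arctan (2 * r / (1 - r ^ 2) * sin θ) = Li2 r - Li2 (-r) := by
  set T : ℝ → ℝ := fun θ ↦ arctan (r * sin θ / (1 - r * cos θ)) with hT
  have hcont : Continuous T := continuous_arctan.comp <|
    (by fun_prop : Continuous fun θ ↦ r * sin θ).div (by fun_prop)
      fun θ ↦ (one_sub_mul_cos_pos hr θ).ne'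
  have hint (a b : ℝ) : IntervalIntegrable T MeasureTheory.volume a b :=
    hcont.intervalIntegrable a b
  calc ∫ θ in 0..π / 2, arctan (2 * r / (1 - r ^ 2) * sin θ)
      = ∫ θ in 0..π / 2, (T θ + T (π - θ)) := by
        simp only [hT, arctan_div_one_sub_mul_cos_add_pi_sub hr]
    _ = (∫ θ in 0..π / 2, T θ) + ∫ θ in 0..π / 2, T (π - θ) :=
        integral_add (hint _ _)
          ((hcont.comp (continuous_const.sub continuous_id)).intervalIntegrable _ _)
    _ = (∫ θ in 0..π / 2, T θ) + ∫ θ in π / 2..π, T θ := by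
        rw [integral_comp_sub_left T, sub_half, sub_zero]
    _ = ∫ θ in 0..π, T θ := integral_add_adjacent_intervals (hint _ _) (hint _ _)
    _ = Li2 r - Li2 (-r) := integral_arctan_mul_sin_div_one_sub_mul_cos hr

end Dilogarithm

theorem two_mul_sqrt_two_sub_one_div : 2 * (-1 + √2) / (1 - (-1 + √2) ^ 2) = 1 := by
  have hsq : √2 ^ 2 = 2 := sq_sqrt zero_le_two
  have hden : 1 - (-1 + √2) ^ 2 = 2 * (-1 + √2) := by linear_combination -hsq
  rw [hden, div_self (by linarith [one_lt_sqrt_two])]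

theorem integral_arctan_sin :
    ∫ θ in 0..π / 2, arctan (sin θ) = Li2 (-1 + √2) - Li2 (1 - √2) := by
  have habs : |-1 + √2| < 1 :=
    abs_lt.mpr ⟨by linarith [one_lt_sqrt_two], by linarith [sqrt_two_lt_three_halves]⟩
  have h := integral_arctan_mul_sin habs
  rw [two_mul_sqrt_two_sub_one_div, neg_add, neg_neg, ← sub_eq_add_neg] at h
  simpa only [one_mul] using h

theorem log_sqrt_two_add_one_div_sub_one : log ((√2 + 1) / (√2 - 1)) = -2 * log (-1 + √2) := by
  have hpos : 0 < √2 - 1 := sub_pos.mpr one_lt_sqrt_two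
  have hinv : √2 + 1 = (√2 - 1)⁻¹ :=
    eq_inv_of_mul_eq_one_left (by linear_combination sq_sqrt (zero_le_two (α := ℝ)))
  rw [log_div (by positivity) hpos.ne', hinv, log_inv, neg_add_eq_sub]
  ring

theorem integral_sin_div_one_add_sin_sq :
    ∫ θ in 0..π / 2, sin θ / (1 + sin θ ^ 2) = -(√2 / 2) * log (-1 + √2) := by
  have hsq : √2 ^ 2 = 2 := sq_sqrt zero_le_two
  have hden (θ : ℝ) : 1 + sin θ ^ 2 = √2 ^ 2 - cos θ ^ 2 := by
    rw [hsq, sin_sq]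
    ring
  simp only [hden]
  rw [integral_sin_div_sq_sub_cos_sq one_lt_sqrt_two, log_sqrt_two_add_one_div_sub_one]
  field_simp
  rw [hsq]

/-- mean-width identity (direct approach) for the convex hull of two
orthogonal unit disks through a common center. -/
theorem mean_width_example_one_direct :
    (8 / Real.pi) * (∫ θ in (0 : ℝ)..(Real.pi / 2),
        ∫ φ in (Real.arccos (Real.sin θ / Real.sqrt (2 - Real.cos θ ^ 2)))..(Real.pi / 2),
          Real.sin φ ^ 2) =
    -(1 / Real.pi) * (2 * Real.sqrt 2 * Real.log (-1 + Real.sqrt 2)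
      - 4 * Li2 (-1 + Real.sqrt 2) + 4 * Li2 (1 - Real.sqrt 2)) := by
  have hcos_sq (θ : ℝ) : 2 - cos θ ^ 2 = 1 + sin θ ^ 2 := by rw [sin_sq]; ring
  have harctan : IntervalIntegrable (fun θ ↦ arctan (sin θ)) MeasureTheory.volume 0 (π / 2) :=
    (continuous_arctan.comp continuous_sin).intervalIntegrable _ _
  have hfrac : IntervalIntegrable (fun θ ↦ sin θ / (1 + sin θ ^ 2)) MeasureTheory.volume
      0 (π / 2) :=
    (continuous_sin.div (by fun_prop) fun θ ↦ by positivity).intervalIntegrable _ _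
  simp only [hcos_sq, integral_sin_sq_arccos_div_sqrt]
  rw [integral_div, integral_add harctan hfrac, integral_arctan_sin,
    integral_sin_div_one_add_sin_sq]
  ring
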